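/- arXiv:1906.06202 — 3 statements merged into one kernel-verified Lean document; each statement's English description precedes it below -/
import Mathlib

section
/- Let E : B → Ã ⊇ A be a generalised expectation for a C*-inclusion A ⊆ B, with LN_E := {b : E(b* b) = 0}, RN_E := {b : E(b b*) = 0}, N_E := {b : E((b c)*(b c)) = 0 for all c ∈ B}. Then: (1) E is symmetric if and only if LN_E = RN_E = N_E; (2) E is faithful if and only if LN_E = RN_E = N_E = {0}; (3) E is almost faithful if and only if N_E = {0}, if and only if there is no nonzero closed two-sided ideal of B contained in ker E; (4) E is faithful if and only if E is almost faithful and symmetric. -/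
/-- A square matrix over a C*-algebra is positive iff it is of the form `yᴴ * y`. -/
def MatrixIsPositive {B : Type*} [NonUnitalCStarAlgebra B] {n : ℕ}
    (M : Matrix (Fin n) (Fin n) B) : Prop :=
  ∃ y : Matrix (Fin n) (Fin n) B, M = y.conjTranspose * y

/-- A linear map between C*-algebras is completely positive if all the induced entrywise
maps between matrix algebras preserve positivity. -/
def CompletelyPositive {B C : Type*} [NonUnitalCStarAlgebra B] [NonUnitalCStarAlgebra C]
    (E : B →ₗ[ℂ] C) : Prop :=
  ∀ (n : ℕ) (M : Matrix (Fin n) (Fin n) B),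
    MatrixIsPositive M → MatrixIsPositive (M.map ⇑E)

/-- A closed (ring-theoretic) two-sided ideal of `B`. -/
def IsClosedTwoSidedIdeal {B : Type*} [NonUnitalCStarAlgebra B] (S : Set B) : Prop :=
  IsClosed S ∧ (0 : B) ∈ S ∧ (∀ x ∈ S, ∀ y ∈ S, x + y ∈ S) ∧ (∀ x ∈ S, -x ∈ S) ∧
    (∀ b : B, ∀ x ∈ S, b * x ∈ S) ∧ ∀ b : B, ∀ x ∈ S, x * b ∈ S

section NullSpaces

variable {B C : Type*} [NonUnitalCStarAlgebra B] [NonUnitalCStarAlgebra C]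

lemma eq_zero_of_star_mul_self_add_eq_zero {x y : C} (h : star x * x + star y * y = 0) :
    x = 0 ∧ y = 0 := by
  let _ := CStarAlgebra.spectralOrder C
  have := CStarAlgebra.spectralOrderedRing C
  have hxy := (add_eq_zero_iff_of_nonneg (star_mul_self_nonneg x) (star_mul_self_nonneg y)).1 h
  simpa only [CStarRing.star_mul_self_eq_zero_iff] using hxy

/-- The Cauchy–Schwarz argument: if `E (b* b) = 0`, then `E` kills `a b` and `b* a`. -/
lemma CompletelyPositive.map_mul_eq_zero {E : B →ₗ[ℂ] C} (hcp : CompletelyPositive E) {b : B}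
    (hb : E (star b * b) = 0) (a : B) : E (a * b) = 0 ∧ E (star b * a) = 0 := by
  suffices h : ∀ a : B, E (star a * b) = 0 ∧ E (star b * a) = 0 from
    ⟨by simpa using (h (star a)).1, (h a).2⟩
  intro a
  let y : Matrix (Fin 2) (Fin 2) B := !![a, b; 0, 0]
  obtain ⟨z, hz⟩ := hcp 2 (y.conjTranspose * y) ⟨y, rfl⟩
  have h01 := congrFun (congrFun hz 0) 1
  have h10 := congrFun (congrFun hz 1) 0
  have h11 := congrFun (congrFun hz 1) 1
  simp only [Matrix.map_apply, Matrix.mul_apply, Matrix.conjTranspose_apply, Fin.sum_univ_two,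
    y, Matrix.of_apply, Matrix.cons_val', Matrix.cons_val_zero, Matrix.cons_val_one,
    Matrix.cons_val_fin_one, mul_zero, add_zero] at h01 h10 h11
  rw [hb] at h11
  obtain ⟨h0, h1⟩ := eq_zero_of_star_mul_self_add_eq_zero h11.symm
  simp only [h0, h1, star_zero, mul_zero, zero_mul, add_zero] at h01 h10
  exact ⟨h01, h10⟩

lemma CompletelyPositive.map_mul_star_self_eq_zero_iff {E : B →ₗ[ℂ] C}
    (hcp : CompletelyPositive E) {b : B} :
    E (b * star b) = 0 ↔ ∀ x : B, E (b * x) = 0 := by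
  refine ⟨fun h x => ?_, fun h => h _⟩
  simpa using (hcp.map_mul_eq_zero (b := star b) (by simpa using h) x).2

lemma CompletelyPositive.forall_map_star_mul_self_eq_zero_iff {E : B →ₗ[ℂ] C}
    (hcp : CompletelyPositive E) {b : B} :
    (∀ c : B, E (star (b * c) * (b * c)) = 0) ↔ ∀ x c : B, E (x * (b * c)) = 0 :=
  ⟨fun h x c => (hcp.map_mul_eq_zero (h c) x).1, fun h c => h _ c⟩

lemma eq_zero_of_forall_map_mul_right {E : B → C} (hE : Continuous E) {b : B}
    (h : ∀ c : B, E (b * c) = 0) : E b = 0 := by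
  let _ := CStarAlgebra.spectralOrder B
  have := CStarAlgebra.spectralOrderedRing B
  have hu := CStarAlgebra.increasingApproximateUnit B
  have := hu.neBot
  have ht := (hE.tendsto b).comp (hu.tendsto_mul_left b)
  exact tendsto_nhds_unique ht (tendsto_const_nhds.congr fun c => (h c).symm)

lemma eq_zero_of_forall_map_mul_left {E : B → C} (hE : Continuous E) {b : B}
    (h : ∀ c : B, E (c * b) = 0) : E b = 0 := by
  let _ := CStarAlgebra.spectralOrder B
  have := CStarAlgebra.spectralOrderedRing B
  have hu := CStarAlgebra.increasingApproximateUnit B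
  have := hu.neBot
  have ht := (hE.tendsto b).comp (hu.tendsto_mul_right b)
  exact tendsto_nhds_unique ht (tendsto_const_nhds.congr fun c => (h c).symm)

lemma isClosedTwoSidedIdeal_setOf_forall_map_mul_mul {E : B →ₗ[ℂ] C} (hE : Continuous E) :
    IsClosedTwoSidedIdeal {b : B | ∀ x c : B, E (x * (b * c)) = 0} := by
  refine ⟨?_, ?_, ?_, ?_, ?_, ?_⟩
  · simp only [Set.ofPred_forall]
    refine isClosed_iInter fun x => isClosed_iInter fun c => ?_
    exact isClosed_eq (by fun_prop) continuous_const
  · intro x c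
    simp
  · intro a ha b hb x c
    rw [add_mul, mul_add, map_add, ha, hb, add_zero]
  · intro a ha x c
    rw [neg_mul, mul_neg, map_neg, ha, neg_zero]
  · intro a b hb x c
    simpa [mul_assoc] using hb (x * a) c
  · intro a b hb x c
    simpa [mul_assoc] using hb x (a * c)

end NullSpaces

/-- For a generalised expectation `E : B → Ã ⊇ A` with
`LN_E = {b : E(b*b) = 0}`, `RN_E = {b : E(bb*) = 0}`,
`N_E = {b : E((bc)*(bc)) = 0 for all c}`:
(1) `E` is symmetric iff `LN_E = RN_E = N_E`;
(2) `E` is faithful iff `LN_E = RN_E = N_E = {0}`;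
(3) `E` is almost faithful iff `N_E = {0}` iff no nonzero closed two-sided ideal of `B` is
contained in `ker E`;
(4) `E` is faithful iff `E` is almost faithful and symmetric. -/
theorem faithfulness_characterisations
    {A B C : Type*} [NonUnitalCStarAlgebra A] [NonUnitalCStarAlgebra B]
    [NonUnitalCStarAlgebra C] [Nontrivial A]
    (ι : A →⋆ₙₐ[ℂ] B) (κ : A →⋆ₙₐ[ℂ] C) (hι : Isometry ι) (hκ : Isometry κ)
    (E : B →ₗ[ℂ] C)
    (hcp : CompletelyPositive E)
    (hcontr : ∀ b : B, ‖E b‖ ≤ ‖b‖)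
    (hres : ∀ a : A, E (ι a) = κ a) :
    ((∀ b : B, E (star b * b) = 0 → E (b * star b) = 0) ↔
      ({b : B | E (star b * b) = 0} = {b : B | E (b * star b) = 0} ∧
        {b : B | E (b * star b) = 0} = {b : B | ∀ c : B, E (star (b * c) * (b * c)) = 0})) ∧
    ((∀ b : B, E (star b * b) = 0 → b = 0) ↔
      ({b : B | E (star b * b) = 0} = {0} ∧ {b : B | E (b * star b) = 0} = {0} ∧
        {b : B | ∀ c : B, E (star (b * c) * (b * c)) = 0} = {0})) ∧
    ((∀ b : B, (∀ c : B, E (star (b * c) * (b * c)) = 0) → b = 0) ↔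
      {b : B | ∀ c : B, E (star (b * c) * (b * c)) = 0} = {0}) ∧
    ((∀ b : B, (∀ c : B, E (star (b * c) * (b * c)) = 0) → b = 0) ↔
      (∀ J : Set B, IsClosedTwoSidedIdeal J → J ⊆ {b : B | E b = 0} → J = {0})) ∧
    ((∀ b : B, E (star b * b) = 0 → b = 0) ↔
      ((∀ b : B, (∀ c : B, E (star (b * c) * (b * c)) = 0) → b = 0) ∧
        (∀ b : B, E (star b * b) = 0 → E (b * star b) = 0))) := by
  have hE : Continuous E :=
    AddMonoidHomClass.continuous_of_bound E 1 fun b => by simpa using hcontr b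
  have null_left : ∀ b : B, (∀ c : B, E (star (b * c) * (b * c)) = 0) → E (star b * b) = 0 := by
    intro b hb
    rw [hcp.forall_map_star_mul_self_eq_zero_iff] at hb
    exact eq_zero_of_forall_map_mul_right hE fun c => by simpa [mul_assoc] using hb (star b) c
  have null_right : ∀ b : B, (∀ c : B, E (star (b * c) * (b * c)) = 0) →
      E (b * star b) = 0 := by
    intro b hb
    rw [hcp.forall_map_star_mul_self_eq_zero_iff] at hb
    exact eq_zero_of_forall_map_mul_left hE fun x => hb x (star b)
  have null_zero : ∀ c : B, E (star ((0 : B) * c) * (0 * c)) = 0 := by simp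
  have symm_iff : (∀ b : B, E (star b * b) = 0 → E (b * star b) = 0) →
      ∀ b : B, E (star b * b) = 0 ↔ E (b * star b) = 0 := fun h b =>
    ⟨h b, fun hb => by simpa using h (star b) (by simpa using hb)⟩
  have almost_iff : (∀ b : B, (∀ c : B, E (star (b * c) * (b * c)) = 0) → b = 0) ↔
      {b : B | ∀ c : B, E (star (b * c) * (b * c)) = 0} = {0} := by
    rw [Set.eq_singleton_iff_unique_mem]
    exact ⟨fun h => ⟨null_zero, h⟩, fun h => h.2⟩
  have symm_null : (∀ b : B, E (star b * b) = 0 → E (b * star b) = 0) →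
      ∀ b : B, E (b * star b) = 0 → ∀ c : B, E (star (b * c) * (b * c)) = 0 := by
    intro h b hb c
    rw [symm_iff h, mul_assoc]
    exact hcp.map_mul_star_self_eq_zero_iff.1 hb _
  refine ⟨⟨fun h => ⟨?_, ?_⟩, fun h b hb => h.1.subset hb⟩,
    ⟨fun h => ⟨?_, ?_, ?_⟩, fun h b hb => h.1.subset hb⟩, almost_iff, ⟨?_, ?_⟩,
    ⟨fun h => ⟨fun b hb => h b (null_left b hb), fun b hb => by simp [h b hb]⟩,
      fun h b hb => h.1 b (symm_null h.2 b (h.2 b hb))⟩⟩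
  · exact Set.ext (symm_iff h)
  · exact Set.ext fun b => ⟨symm_null h b, null_right b⟩
  · exact Set.eq_singleton_iff_unique_mem.2 ⟨by simp, h⟩
  · exact Set.eq_singleton_iff_unique_mem.2
      ⟨by simp, fun b hb => star_eq_zero.1 (h (star b) (by simpa using hb))⟩
  · exact almost_iff.1 fun b hb => h b (null_left b hb)
  · intro h J hJ hJE
    obtain ⟨-, h0, -, -, hl, hr⟩ := hJ
    exact Set.eq_singleton_iff_unique_mem.2
      ⟨h0, fun b hb => h b fun c => hJE (hl _ _ (hr c b hb))⟩
  · intro h b hb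
    refine (h _ (isClosedTwoSidedIdeal_setOf_forall_map_mul_mul hE) fun a ha => ?_).subset
      (hcp.forall_map_star_mul_self_eq_zero_iff.1 hb)
    exact eq_zero_of_forall_map_mul_right hE fun c =>
      eq_zero_of_forall_map_mul_left hE fun x => ha x c
end

section
/- Let A be a C*-algebra, X a normed A-bimodule, and Y ⊆ X a closed A-subbimodule. Suppose that (i) every y ∈ Y satisfies Kishimoto's condition, and (ii) every x ∈ X satisfies Kishimoto's condition modulo Y, i.e., for every hereditary C*-subalgebra D of A and every ε > 0 there is a positive a ∈ D with ‖a‖ = 1 and inf_{y ∈ Y} ‖a · x · a − y‖ < ε. Then every x ∈ X satisfies Kishimoto's condition; that is, extensions of aperiodic normed A-bimodules are aperiodic. -/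
/-- A hereditary C*-subalgebra of `A`: a nonzero closed *-subalgebra `D` such that
`a ∈ D`, `0 ≤ b ≤ a` imply `b ∈ D`. -/
def IsHereditarySubalgebra {A : Type*} [NonUnitalCStarAlgebra A] [PartialOrder A]
    [StarOrderedRing A] (D : Set A) : Prop :=
  IsClosed D ∧ (∃ x ∈ D, x ≠ 0) ∧ (0 : A) ∈ D ∧
    (∀ x ∈ D, ∀ y ∈ D, x + y ∈ D) ∧ (∀ (c : ℂ), ∀ x ∈ D, c • x ∈ D) ∧
    (∀ x ∈ D, ∀ y ∈ D, x * y ∈ D) ∧ (∀ x ∈ D, star x ∈ D) ∧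
    ∀ a ∈ D, ∀ b : A, 0 ≤ b → b ≤ a → b ∈ D

/-- Kishimoto's condition for an element `x` of a normed `A`-bimodule `X`, whose left and
right module actions are given by the bilinear maps `L` and `R`. -/
def KishimotoCondition {A X : Type*} [NonUnitalCStarAlgebra A] [PartialOrder A]
    [StarOrderedRing A] [NormedAddCommGroup X] [NormedSpace ℂ X]
    (L R : A →ₗ[ℂ] X →ₗ[ℂ] X) (x : X) : Prop :=
  ∀ D : Set A, IsHereditarySubalgebra D → ∀ ε : ℝ, 0 < ε →
    ∃ a ∈ D, 0 ≤ a ∧ ‖a‖ = 1 ∧ ‖L a (R a x)‖ < ε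

section

variable {A : Type*} [NonUnitalCStarAlgebra A] [PartialOrder A] [StarOrderedRing A]

/-- If a self-adjoint `e` is a right unit for `b`, then it is one for everything positive
dominated by `b`. -/
lemma mul_eq_self_of_nonneg_of_le {e b c : A} (he : IsSelfAdjoint e) (hbe : b * e = b)
    (hc : 0 ≤ c) (hcb : c ≤ b) : c * e = c := by
  obtain ⟨s, rfl⟩ := CStarAlgebra.nonneg_iff_eq_star_mul_self.mp hc
  obtain ⟨t, ht⟩ := CStarAlgebra.nonneg_iff_eq_star_mul_self.mp (sub_nonneg.mpr hcb)
  have hsum : star (s - s * e) * (s - s * e) + star (t - t * e) * (t - t * e) = 0 := by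
    have hb : b = star s * s + star t * t := by rw [← ht]; abel
    have expand (u : A) : star (u - u * e) * (u - u * e) =
        (star u * u - star u * u * e) - e * (star u * u - star u * u * e) := by
      simp only [star_sub, star_mul, he.star_eq, mul_sub, sub_mul, mul_assoc]
      abel
    calc _ = (b - b * e) - e * (b - b * e) := by
          rw [expand, expand, hb]
          simp only [mul_sub, add_mul, mul_add]
          abel
      _ = 0 := by simp [hbe]
  have hs : star (s - s * e) * (s - s * e) = 0 :=
    ((add_eq_zero_iff_of_nonneg (star_mul_self_nonneg _) (star_mul_self_nonneg _)).mp hsum).1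
  rw [CStarRing.star_mul_self_eq_zero_iff, sub_eq_zero] at hs
  rw [mul_assoc, ← hs]

/-- The elements of a hereditary subalgebra for which a given self-adjoint element is a two-sided
unit form a hereditary subalgebra, provided some nonzero element is of this kind. -/
lemma IsHereditarySubalgebra.inter_unit {D : Set A} (hD : IsHereditarySubalgebra D) {e g : A}
    (he : IsSelfAdjoint e) (hgD : g ∈ D) (hg : g ≠ 0) (heg : e * g = g) (hge : g * e = g) :
    IsHereditarySubalgebra {b | b ∈ D ∧ e * b = b ∧ b * e = b} := by
  obtain ⟨hclosed, -, hzero, hadd, hsmul, hmul, hstar, hher⟩ := hD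
  refine ⟨?_, ⟨g, ⟨hgD, heg, hge⟩, hg⟩, by simpa using hzero, ?_, ?_, ?_, ?_, ?_⟩
  · exact hclosed.inter ((isClosed_eq (by fun_prop) continuous_id).inter
      (isClosed_eq (by fun_prop) continuous_id))
  · rintro x ⟨hx, hx₁, hx₂⟩ y ⟨hy, hy₁, hy₂⟩
    exact ⟨hadd x hx y hy, by rw [mul_add, hx₁, hy₁], by rw [add_mul, hx₂, hy₂]⟩
  · rintro c x ⟨hx, hx₁, hx₂⟩
    exact ⟨hsmul c x hx, by rw [mul_smul_comm, hx₁], by rw [smul_mul_assoc, hx₂]⟩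
  · rintro x ⟨hx, hx₁, hx₂⟩ y ⟨hy, hy₁, hy₂⟩
    exact ⟨hmul x hx y hy, by rw [← mul_assoc, hx₁], by rw [mul_assoc, hy₂]⟩
  · rintro x ⟨hx, hx₁, hx₂⟩
    refine ⟨hstar x hx, ?_, ?_⟩
    · simpa [he.star_eq] using congrArg star hx₂
    · simpa [he.star_eq] using congrArg star hx₁
  · rintro b ⟨hb, -, hb₂⟩ c hc hcb
    have hce := mul_eq_self_of_nonneg_of_le he hb₂ hc hcb
    refine ⟨hher b hb c hc hcb, ?_, hce⟩
    simpa [he.star_eq, (IsSelfAdjoint.of_nonneg hc).star_eq] using congrArg star hce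

/-- A positive element of norm one can be perturbed to a self-adjoint element that is a unit for
some nonzero positive element below the original one. -/
lemma exists_unit_near_of_norm_eq_one {a : A} (ha : 0 ≤ a) (hnorm : ‖a‖ = 1) {δ : ℝ}
    (hδ : 0 < δ) : ∃ e g : A, IsSelfAdjoint e ∧ ‖e - a‖ ≤ δ ∧ 0 ≤ g ∧ g ≤ a ∧ g ≠ 0 ∧
      e * g = g ∧ g * e = g := by
  have hsa : IsSelfAdjoint a := .of_nonneg ha
  have hσ₀ (t : ℝ) (ht : t ∈ quasispectrum ℝ a) : 0 ≤ t :=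
    quasispectrum_nonneg_of_nonneg a ha t ht
  have hσ₁ (t : ℝ) (ht : t ∈ quasispectrum ℝ a) : t ≤ 1 := by
    have h := norm_apply_le_norm_cfcₙ (id : ℝ → ℝ) a ht
    rw [cfcₙ_id ℝ a, hnorm] at h
    exact (Real.le_norm_self t).trans h
  let f : ℝ → ℝ := fun t ↦ min 1 ((1 + δ) * t)
  let g : ℝ → ℝ := fun t ↦ t - (1 + δ)⁻¹ * f t
  have hf : Continuous f := by fun_prop
  have hg : Continuous g := by fun_prop
  have hf₀ : f 0 = 0 := by simp [f]
  have hg₀ : g 0 = 0 := by simp [g, hf₀]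
  have hδ₁ : 0 < 1 + δ := by linarith
  have hf_nonneg (t : ℝ) (ht : 0 ≤ t) : 0 ≤ f t := le_min zero_le_one (by positivity)
  have hfg (t : ℝ) : f t * g t = g t := by
    rcases le_total 1 ((1 + δ) * t) with h | h
    · simp [f, min_eq_left h]
    · have : g t = 0 := by
        simp only [g, f, min_eq_right h]
        field_simp
        ring
      simp [this]
  have hg_eq : cfcₙ g a = a - (1 + δ)⁻¹ • cfcₙ f a := by
    rw [cfcₙ_sub (fun t : ℝ ↦ t) (fun t ↦ (1 + δ)⁻¹ * f t) a (by fun_prop) rfl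
      (by fun_prop) (by simp [hf₀]), cfcₙ_id' ℝ a,
      cfcₙ_const_mul _ f a hf.continuousOn hf₀]
  refine ⟨cfcₙ f a, cfcₙ g a, cfcₙ_predicate f a, ?_, ?_, ?_, ?_, ?_, ?_⟩
  · nth_rw 2 [← cfcₙ_id' ℝ a]
    rw [← cfcₙ_sub f (fun t : ℝ ↦ t) a hf.continuousOn hf₀ (by fun_prop) rfl]
    refine norm_cfcₙ_le fun t ht ↦ ?_
    have h₀ := hσ₀ t ht
    have h₁ := hσ₁ t ht
    rw [Real.norm_eq_abs, abs_le]
    rcases min_cases 1 ((1 + δ) * t) with ⟨h, h'⟩ | ⟨h, h'⟩ <;> simp only [f, h] <;>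
      constructor <;> nlinarith
  · refine cfcₙ_nonneg fun t _ ↦ ?_
    have : (1 + δ)⁻¹ * f t ≤ (1 + δ)⁻¹ * ((1 + δ) * t) := by
      gcongr
      exact min_le_right _ _
    rw [inv_mul_cancel_left₀ hδ₁.ne'] at this
    exact sub_nonneg.mpr this
  · rw [hg_eq, sub_le_self_iff]
    exact smul_nonneg (by positivity) (cfcₙ_nonneg fun t ht ↦ hf_nonneg t (hσ₀ t ht))
  · intro h
    rw [hg_eq, sub_eq_zero] at h
    have hfn : ‖cfcₙ f a‖ ≤ 1 := norm_cfcₙ_le fun t ht ↦ by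
      rw [Real.norm_of_nonneg (hf_nonneg t (hσ₀ t ht))]
      exact min_le_left _ _
    have hlt : (1 + δ)⁻¹ < 1 := inv_lt_one_of_one_lt₀ (by linarith)
    have hn := congrArg norm h
    rw [hnorm, norm_smul, Real.norm_of_nonneg (by positivity)] at hn
    nlinarith [inv_pos.mpr hδ₁]
  · rw [← cfcₙ_mul f g a hf.continuousOn hf₀ hg.continuousOn hg₀]
    simp only [hfg]
  · rw [← cfcₙ_mul g f a hg.continuousOn hg₀ hf.continuousOn hf₀]
    simp only [mul_comm (g _), hfg]

/-- A positive norm one element of a hereditary subalgebra acts almost as a unit on some smaller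
hereditary subalgebra. -/
lemma IsHereditarySubalgebra.exists_subset_almost_unit {D : Set A}
    (hD : IsHereditarySubalgebra D) {a : A} (haD : a ∈ D) (ha : 0 ≤ a) (hnorm : ‖a‖ = 1) {δ : ℝ}
    (hδ : 0 < δ) : ∃ D' ⊆ D, IsHereditarySubalgebra D' ∧
      ∀ b ∈ D', ‖b - b * a‖ ≤ ‖b‖ * δ ∧ ‖b - a * b‖ ≤ δ * ‖b‖ := by
  obtain ⟨e, g, he, hea, hg, hga, hg0, heg, hge⟩ := exists_unit_near_of_norm_eq_one ha hnorm hδ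
  have hgD : g ∈ D := hD.2.2.2.2.2.2.2 a haD g hg hga
  refine ⟨_, fun b hb ↦ hb.1, hD.inter_unit he hgD hg0 heg hge, ?_⟩
  rintro b ⟨-, heb, hbe⟩
  constructor
  · calc ‖b - b * a‖ = ‖b * (e - a)‖ := by rw [mul_sub, hbe]
      _ ≤ ‖b‖ * δ := norm_mul_le_of_le le_rfl hea
  · calc ‖b - a * b‖ = ‖(e - a) * b‖ := by rw [sub_mul, heb]
      _ ≤ δ * ‖b‖ := norm_mul_le_of_le hea le_rfl

end

/-- Extensions of aperiodic normed `A`-bimodules are aperiodic: if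
`Y ⊆ X` is a closed subbimodule all of whose elements satisfy Kishimoto's condition, and
every `x ∈ X` satisfies Kishimoto's condition modulo `Y`, then every `x ∈ X` satisfies
Kishimoto's condition. -/
theorem kishimoto_extension
    {A X : Type*} [NonUnitalCStarAlgebra A] [PartialOrder A] [StarOrderedRing A]
    [NormedAddCommGroup X] [NormedSpace ℂ X]
    (L R : A →ₗ[ℂ] X →ₗ[ℂ] X)
    (hL : ∀ (a b : A) (x : X), L (a * b) x = L a (L b x))
    (hR : ∀ (a b : A) (x : X), R (a * b) x = R b (R a x))
    (hLR : ∀ (a b : A) (x : X), L a (R b x) = R b (L a x))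
    (hLnorm : ∀ (a : A) (x : X), ‖L a x‖ ≤ ‖a‖ * ‖x‖)
    (hRnorm : ∀ (a : A) (x : X), ‖R a x‖ ≤ ‖x‖ * ‖a‖)
    (Y : Set X) (hYclosed : IsClosed Y) (hY0 : (0 : X) ∈ Y)
    (hYadd : ∀ x ∈ Y, ∀ y ∈ Y, x + y ∈ Y)
    (hYsmul : ∀ (c : ℂ), ∀ y ∈ Y, c • y ∈ Y)
    (hYL : ∀ (a : A), ∀ y ∈ Y, L a y ∈ Y)
    (hYR : ∀ (a : A), ∀ y ∈ Y, R a y ∈ Y)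
    (hKishY : ∀ y ∈ Y, KishimotoCondition L R y)
    (hKishModY : ∀ x : X, ∀ D : Set A, IsHereditarySubalgebra D → ∀ ε : ℝ, 0 < ε →
      ∃ a ∈ D, 0 ≤ a ∧ ‖a‖ = 1 ∧ ∃ y ∈ Y, ‖L a (R a x) - y‖ < ε) :
    ∀ x : X, KishimotoCondition L R x := by
  intro x D hD ε hε
  set δ : ℝ := ε / (4 * (‖x‖ + 1)) with hδ_def
  have hx : 0 < ‖x‖ + 1 := by positivity
  have hδ : 0 < δ := by positivity
  have hδx : δ * ‖x‖ ≤ ε / 4 := by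
    calc δ * ‖x‖ ≤ δ * (‖x‖ + 1) := by gcongr; linarith
      _ = ε / 4 := by rw [hδ_def]; field_simp
  obtain ⟨a, haD, ha, hanorm, y, hy, hay⟩ := hKishModY x D hD (ε / 4) (by positivity)
  obtain ⟨D', hD'D, hD', hunit⟩ := hD.exists_subset_almost_unit haD ha hanorm hδ
  obtain ⟨b, hbD', hb, hbnorm, hby⟩ := hKishY y hy D' hD' (ε / 4) (by positivity)
  obtain ⟨hba, hab⟩ := hunit b hbD'
  rw [hbnorm, one_mul] at hba
  rw [hbnorm, mul_one] at hab
  refine ⟨b, hD'D hbD', hb, hbnorm, ?_⟩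
  have hdecomp : L b (R b x) = L (b - b * a) (R b x) + L (b * a) (R (b - a * b) x)
      + L b (R b (L a (R a x) - y)) + L b (R b y) := by
    simp only [map_sub, LinearMap.sub_apply, hL, hR, ← hLR a b]
    abel
  have hLle {c : A} {z : X} {r s : ℝ} (hc : ‖c‖ ≤ r) (hz : ‖z‖ ≤ s) : ‖L c z‖ ≤ r * s :=
    (hLnorm c z).trans (mul_le_mul hc hz (norm_nonneg _) ((norm_nonneg _).trans hc))
  have hRle {c : A} {z : X} {r s : ℝ} (hc : ‖c‖ ≤ r) (hz : ‖z‖ ≤ s) : ‖R c z‖ ≤ s * r :=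
    (hRnorm c z).trans (mul_le_mul hz hc (norm_nonneg _) ((norm_nonneg _).trans hz))
  have h₁ : ‖L (b - b * a) (R b x)‖ ≤ δ * (‖x‖ * 1) := hLle hba (hRle hbnorm.le le_rfl)
  have h₂ : ‖L (b * a) (R (b - a * b) x)‖ ≤ (1 * 1) * (‖x‖ * δ) :=
    hLle (norm_mul_le_of_le hbnorm.le hanorm.le) (hRle hab le_rfl)
  have h₃ : ‖L b (R b (L a (R a x) - y))‖ ≤ 1 * (‖L a (R a x) - y‖ * 1) :=
    hLle hbnorm.le (hRle hbnorm.le le_rfl)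
  rw [hdecomp]
  refine norm_add₄_le.trans_lt ?_
  linarith
end

section
/- Let A ⊆ B be an aperiodic C*-inclusion and let J be a closed two-sided ideal of B. Then J ∩ A = {0} if and only if every element x ∈ J satisfies Kishimoto's condition as an element of the A-bimodule J with the norm of B: for every hereditary C*-subalgebra D of A and every ε > 0 there is a positive a ∈ D with ‖a‖ = 1 and ‖a x a‖ < ε. -/
/-- A closed *-subalgebra of `B`. -/
def IsCStarSubalgebra {B : Type*} [NonUnitalCStarAlgebra B] (A : Set B) : Prop :=
  IsClosed A ∧ (0 : B) ∈ A ∧ (∀ x ∈ A, ∀ y ∈ A, x + y ∈ A) ∧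
    (∀ (c : ℂ), ∀ x ∈ A, c • x ∈ A) ∧ (∀ x ∈ A, ∀ y ∈ A, x * y ∈ A) ∧ ∀ x ∈ A, star x ∈ A

/-- A hereditary C*-subalgebra `D` of the subalgebra `A ⊆ B`: a nonzero closed
*-subalgebra of `A` such that `a ∈ D`, `b ∈ A`, `0 ≤ b ≤ a` imply `b ∈ D`. -/
def IsHereditarySubalgebraIn {B : Type*} [NonUnitalCStarAlgebra B] [PartialOrder B]
    [StarOrderedRing B] (A D : Set B) : Prop :=
  D ⊆ A ∧ IsClosed D ∧ (∃ x ∈ D, x ≠ 0) ∧ (0 : B) ∈ D ∧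
    (∀ x ∈ D, ∀ y ∈ D, x + y ∈ D) ∧ (∀ (c : ℂ), ∀ x ∈ D, c • x ∈ D) ∧
    (∀ x ∈ D, ∀ y ∈ D, x * y ∈ D) ∧ (∀ x ∈ D, star x ∈ D) ∧
    ∀ a ∈ D, ∀ b ∈ A, 0 ≤ b → b ≤ a → b ∈ D

/-- The C*-inclusion `A ⊆ B` is aperiodic: every element of `B` satisfies Kishimoto's
condition modulo `A`. -/
def IsAperiodicInclusion {B : Type*} [NonUnitalCStarAlgebra B] [PartialOrder B]
    [StarOrderedRing B] (A : Set B) : Prop :=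
  ∀ x : B, ∀ D : Set B, IsHereditarySubalgebraIn A D → ∀ ε : ℝ, 0 < ε →
    ∃ a ∈ D, 0 ≤ a ∧ ‖a‖ = 1 ∧ ∃ y ∈ A, ‖a * x * a - y‖ < ε

section Helpers

variable {B : Type*} [NonUnitalCStarAlgebra B]

lemma IsCStarSubalgebra.cfcₙ_mem {A : Set B} (hA : IsCStarSubalgebra A) (f : ℝ → ℝ) {c : B}
    (hc : c ∈ A) : cfcₙ f c ∈ A := by
  obtain ⟨hcl, h0, hadd, hsmul, hmul, hstar⟩ := hA
  let S : NonUnitalStarSubalgebra ℂ B :=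
    { carrier := A
      zero_mem' := h0
      add_mem' := fun {x y} hx hy => hadd x hx y hy
      mul_mem' := fun {x y} hx hy => hmul x hx y hy
      smul_mem' := fun r x hx => hsmul r x hx
      star_mem' := fun {x} hx => hstar x hx }
  have hS : IsClosed (S : Set B) := hcl
  exact _root_.cfcₙ_mem (𝕜' := ℂ) (s := S) f hc

variable [PartialOrder B] [StarOrderedRing B]

/-- Compressing by the formal element `1 - u` preserves `star z * z ≤ p`. -/
lemma star_sub_mul_self_le {z p : B} (h : star z * z ≤ p) (u : B) :
    star (z - z * u) * (z - z * u) ≤ p - p * u - star u * p + star u * p * u := by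
  obtain ⟨v, hv⟩ := CStarAlgebra.nonneg_iff_eq_star_mul_self.mp (sub_nonneg.mpr h)
  rw [← sub_nonneg]
  have key : p - p * u - star u * p + star u * p * u - star (z - z * u) * (z - z * u)
      = star (v - v * u) * (v - v * u) := by
    have hp : p = star v * v + star z * z := by rw [← hv]; abel
    rw [hp]
    simp only [star_sub, star_mul]
    noncomm_ring
  rw [key]
  exact star_mul_self_nonneg _

/-- Closed two-sided ideals are hereditary, in the form of a statement about square roots. -/
lemma IsClosedTwoSidedIdeal.mem_of_star_mul_self_le {J : Set B} (hJ : IsClosedTwoSidedIdeal J)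
    {z p : B} (hp : p ∈ J) (h : star z * z ≤ p) : z ∈ J := by
  obtain ⟨hcl, -, -, -, hl, hr⟩ := hJ
  rw [← hcl.closure_eq, Metric.mem_closure_iff]
  intro ε hε
  have hp0 : 0 ≤ p := (star_mul_self_nonneg z).trans h
  obtain ⟨δ, hδ, hδε⟩ : ∃ δ : ℝ, 0 < δ ∧ δ < ε ^ 2 := exists_between (by positivity)
  have hpos : ∀ t : ℝ, t ^ 2 + δ ^ 2 ≠ 0 := fun t => by positivity
  let k : ℝ → ℝ := fun t => t / (t ^ 2 + δ ^ 2)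
  have hk : Continuous k := by fun_prop (disch := assumption)
  have hk0 : k 0 = 0 := by simp [k]
  let u : B := p * cfcₙ k p
  refine ⟨z * u, hl _ _ (hr _ _ hp), ?_⟩
  have hu : u = cfcₙ (fun t => t * k t) p := by
    rw [cfcₙ_mul (fun t => t) k p (by fun_prop) rfl hk.continuousOn hk0, cfcₙ_id' ℝ p]
  have hus : star u = u := by
    rw [hu]; exact (cfcₙ_predicate (p := IsSelfAdjoint) (fun t : ℝ => t * k t) p)
  have huc : Continuous (fun t => t * k t) := by fun_prop
  have hcomp : p - p * u - star u * p + star u * p * u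
      = cfcₙ (fun t => t - t * (t * k t) - (t * k t) * t + (t * k t) * t * (t * k t)) p := by
    rw [cfcₙ_add _ _ _ (by fun_prop) (by simp) (by fun_prop) (by simp),
      cfcₙ_sub _ _ _ (by fun_prop) (by simp) (by fun_prop) (by simp),
      cfcₙ_sub _ _ _ (by fun_prop) (by simp) (by fun_prop) (by simp),
      cfcₙ_mul (fun t => t * k t * t) (fun t => t * k t) _ (by fun_prop) (by simp)
        (by fun_prop) (by simp),
      cfcₙ_mul (fun t => t * k t) (fun t => t) _ (by fun_prop) (by simp) (by fun_prop) (by simp),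
      cfcₙ_mul (fun t => t) (fun t => t * k t) _ (by fun_prop) (by simp) (by fun_prop) (by simp),
      cfcₙ_id' ℝ p, ← hu, hus]
  have hle := CStarAlgebra.norm_le_norm_of_nonneg_of_le (star_mul_self_nonneg _)
    (star_sub_mul_self_le h u)
  have hbound : ‖p - p * u - star u * p + star u * p * u‖ ≤ δ := by
    rw [hcomp]
    refine norm_cfcₙ_le fun t ht => ?_
    have ht0 : 0 ≤ t := quasispectrum_nonneg_of_nonneg p hp0 t ht
    have hval : t - t * (t * k t) - (t * k t) * t + (t * k t) * t * (t * k t)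
        = t * δ ^ 4 / (t ^ 2 + δ ^ 2) ^ 2 := by
      have := hpos t
      simp only [k]
      field_simp
      ring
    rw [hval, Real.norm_of_nonneg (by positivity), div_le_iff₀ (by positivity)]
    have h1 : 2 * t * δ ≤ t ^ 2 + δ ^ 2 := two_mul_le_add_sq t δ
    have h2 : t * δ ^ 3 ≤ (t ^ 2 + δ ^ 2) ^ 2 := by
      calc t * δ ^ 3 ≤ (2 * t * δ) * δ ^ 2 := by nlinarith [mul_nonneg ht0 (pow_pos hδ 3).le]
        _ ≤ (t ^ 2 + δ ^ 2) * (t ^ 2 + δ ^ 2) := by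
          gcongr
          nlinarith [sq_nonneg t]
        _ = _ := by ring
    nlinarith
  rw [CStarRing.norm_star_mul_self] at hle
  rw [dist_eq_norm]
  exact lt_of_pow_lt_pow_left₀ 2 hε.le (by nlinarith)

lemma IsClosedTwoSidedIdeal.star_mem {J : Set B} (hJ : IsClosedTwoSidedIdeal J) {x : B}
    (hx : x ∈ J) : star x ∈ J :=
  hJ.mem_of_star_mul_self_le (hJ.2.2.2.2.2 (star x) x hx) (by simp)

lemma cfcₙ_max_sub_ne_zero {c : B} (hc : 0 ≤ c) {s : ℝ} (hs : 0 ≤ s) (hsc : s < ‖c‖) :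
    cfcₙ (fun t : ℝ => max (t - s) 0) c ≠ 0 := by
  intro h
  refine hsc.not_ge ?_
  rw [← cfcₙ_id' ℝ c]
  refine norm_cfcₙ_le fun t ht => ?_
  have h1 := norm_apply_le_norm_cfcₙ (fun t : ℝ => max (t - s) 0) c ht (by fun_prop) (by simp [hs])
  rw [h, norm_zero, norm_le_zero_iff] at h1
  rw [Real.norm_of_nonneg (quasispectrum_nonneg_of_nonneg c hc t ht)]
  have := le_max_left (t - s) 0
  linarith

/-- If `J ∩ A = {0}`, the quotient map by `J` is isometric on `A`. -/
lemma norm_le_norm_sub_of_inter_eq_zero {A J : Set B} (hA : IsCStarSubalgebra A)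
    (hJ : IsClosedTwoSidedIdeal J) (hAJ : J ∩ A = {0}) {y j : B} (hy : y ∈ A) (hj : j ∈ J) :
    ‖y‖ ≤ ‖y - j‖ := by
  by_contra! hlt
  have hjs := hJ.star_mem hj
  obtain ⟨-, -, hadd, -, hl, hr⟩ := id hJ
  let c : B := star y * y
  have hc : 0 ≤ c := star_mul_self_nonneg y
  have hcA : c ∈ A := hA.2.2.2.2.1 _ (hA.2.2.2.2.2 _ hy) _ hy
  let w : B := star (y - j) * (y - j)
  have hnc : ‖c‖ = ‖y‖ * ‖y‖ := CStarRing.norm_star_mul_self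
  have hnw : ‖w‖ = ‖y - j‖ * ‖y - j‖ := CStarRing.norm_star_mul_self
  have hwc : ‖w‖ < ‖c‖ := by rw [hnc, hnw]; gcongr
  obtain ⟨s, hws, hsc⟩ := exists_between hwc
  have hs : 0 ≤ s := (norm_nonneg w).trans hws.le
  let f : ℝ → ℝ := fun t => max (t - s) 0
  have hf : Continuous f := by fun_prop
  have hf0 : f 0 = 0 := by simp [f, hs]
  let g : B := cfcₙ f c
  have hg : star g = g := cfcₙ_predicate (p := IsSelfAdjoint) f c
  have hcw : c - w ∈ J := by
    have : c - w = star y * j + star j * (y + -j) := by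
      simp only [c, w, star_sub]; noncomm_ring
    rw [this]
    exact hadd _ (hl _ _ hj) _ (hr _ _ hjs)
  have hlow : s • (g * g) ≤ g * c * g := by
    have h1 : s • (g * g) = cfcₙ (fun t => s * (f t * f t)) c := by
      rw [cfcₙ_const_mul s (fun t => f t * f t) c (by fun_prop) (by simp [hf0]),
        cfcₙ_mul f f c (by fun_prop) hf0 (by fun_prop) hf0]
    have h2 : g * c * g = cfcₙ (fun t => f t * t * f t) c := by
      rw [cfcₙ_mul (fun t => f t * t) f c (by fun_prop) (by simp) (by fun_prop) hf0,
        cfcₙ_mul f (fun t => t) c (by fun_prop) hf0 (by fun_prop) rfl, cfcₙ_id' ℝ c]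
    rw [h1, h2]
    refine cfcₙ_mono (fun t _ => ?_) (by fun_prop) (by fun_prop) (by simp [hf0]) (by simp)
    rcases le_total t s with hts | hts
    · simp [f, hts]
    · have := mul_self_nonneg (f t)
      nlinarith
  have hup : g * w * g ≤ ‖w‖ • (g * g) := by
    simpa only [hg] using
      CStarAlgebra.star_left_conjugate_le_norm_smul (a := g) (b := w) (.star_mul_self _)
  let r : ℝ := √(s - ‖w‖)
  have hr0 : 0 < r := Real.sqrt_pos.mpr (by linarith)
  have hrr : r * r = s - ‖w‖ := Real.mul_self_sqrt (by linarith)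
  have hle : star (r • g) * (r • g) ≤ g * (c - w) * g := by
    have h1 : star (r • g) * (r • g) = s • (g * g) - ‖w‖ • (g * g) := by
      rw [star_smul, hg, star_trivial, smul_mul_smul_comm, hrr, sub_smul]
    rw [h1, mul_sub, sub_mul]
    exact sub_le_sub hlow hup
  have hmem : r • g ∈ J := hJ.mem_of_star_mul_self_le (hr g _ (hl g _ hcw)) hle
  have hmemA : r • g ∈ A := by
    have := hA.2.2.2.1 (r : ℂ) g (hA.cfcₙ_mem f hcA)
    simpa using this
  have hz : r • g ∈ ({0} : Set B) := hAJ ▸ ⟨hmem, hmemA⟩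
  exact cfcₙ_max_sub_ne_zero hc hs hsc ((smul_eq_zero.mp hz).resolve_left (ne_of_gt hr0))

/-- The elements of `A` on which a self-adjoint `g` acts as a unit form a hereditary subalgebra. -/
lemma isHereditarySubalgebraIn_setOf_mul_eq {A : Set B} (hA : IsCStarSubalgebra A) {g : B}
    (hg : star g = g) (hne : ∃ d ∈ A, g * d = d ∧ d * g = d ∧ d ≠ 0) :
    IsHereditarySubalgebraIn A {d | d ∈ A ∧ g * d = d ∧ d * g = d} := by
  obtain ⟨hcl, h0, hadd, hsmul, hmul, hstar⟩ := hA
  refine ⟨fun d hd => hd.1, ?_, ?_, ⟨h0, by simp, by simp⟩, ?_, ?_, ?_, ?_, ?_⟩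
  · exact hcl.inter ((isClosed_eq (by fun_prop) (by fun_prop)).inter
      (isClosed_eq (by fun_prop) (by fun_prop)))
  · obtain ⟨d, hd, h1, h2, h3⟩ := hne
    exact ⟨d, ⟨hd, h1, h2⟩, h3⟩
  · rintro x ⟨hx, h1, h2⟩ y ⟨hy, h3, h4⟩
    exact ⟨hadd x hx y hy, by rw [mul_add, h1, h3], by rw [add_mul, h2, h4]⟩
  · rintro r x ⟨hx, h1, h2⟩
    exact ⟨hsmul r x hx, by rw [mul_smul_comm, h1], by rw [smul_mul_assoc, h2]⟩
  · rintro x ⟨hx, h1, h2⟩ y ⟨hy, h3, h4⟩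
    exact ⟨hmul x hx y hy, by rw [← mul_assoc, h1], by rw [mul_assoc, h4]⟩
  · rintro x ⟨hx, h1, h2⟩
    refine ⟨hstar x hx, ?_, ?_⟩
    · simpa [hg] using congrArg star h2
    · simpa [hg] using congrArg star h1
  · rintro a ⟨-, h1, h2⟩ b hb hb0 hba
    obtain ⟨v, rfl⟩ := CStarAlgebra.nonneg_iff_eq_star_mul_self.mp hb0
    have h3 := star_sub_mul_self_le hba g
    rw [hg, h1, h2, sub_self, zero_sub, neg_add_cancel] at h3
    have h4 := (CStarRing.star_mul_self_eq_zero_iff _).mp (h3.antisymm (star_mul_self_nonneg _))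
    have h5 : v * g = v := (sub_eq_zero.mp h4).symm
    have h6 : g * star v = star v := by simpa [hg] using congrArg star h5
    exact ⟨hb, by rw [← mul_assoc, h6], by rw [mul_assoc, h5]⟩

/-- On a suitable hereditary subalgebra a nonzero positive `c ∈ A` is bounded below. -/
lemma exists_isHereditarySubalgebraIn_le_norm {A : Set B} (hA : IsCStarSubalgebra A) {c : B}
    (hcA : c ∈ A) (hc : 0 ≤ c) (hc0 : c ≠ 0) :
    ∃ D, IsHereditarySubalgebraIn A D ∧ ∃ s : ℝ, 0 < s ∧
      ∀ a ∈ D, 0 ≤ a → ‖a‖ = 1 → s ≤ ‖a * c * a‖ := by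
  obtain ⟨s, hs, hsc⟩ := exists_between (norm_pos_iff.mpr hc0)
  let f : ℝ → ℝ := fun t => max (t - s) 0
  let e : ℝ → ℝ := fun t => min (s⁻¹ * t) 1
  have hf : Continuous f := by fun_prop
  have he : Continuous e := by fun_prop
  have hf0 : f 0 = 0 := by simp [f, hs.le]
  have he0 : e 0 = 0 := by simp [e]
  have hef : ∀ t, e t * f t = f t := fun t => by
    rcases le_total t s with hts | hts
    · simp [f, hts]
    · have : 1 ≤ s⁻¹ * t := by rw [inv_mul_eq_div, one_le_div hs]; exact hts
      simp [e, this]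
  let g : B := cfcₙ e c
  have hg : star g = g := cfcₙ_predicate (p := IsSelfAdjoint) e c
  refine ⟨_, isHereditarySubalgebraIn_setOf_mul_eq hA hg ⟨cfcₙ f c, hA.cfcₙ_mem f hcA, ?_, ?_,
    cfcₙ_max_sub_ne_zero hc hs.le hsc⟩, s, hs, ?_⟩
  · rw [← cfcₙ_mul e f c (by fun_prop) he0 (by fun_prop) hf0]
    simp only [hef]
  · rw [← cfcₙ_mul f e c (by fun_prop) hf0 (by fun_prop) he0]
    simp only [mul_comm (f _), hef]
  · rintro a ⟨-, h1, -⟩ ha ha1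
    have has : star a = a := ha.isSelfAdjoint
    have hgc : g ≤ s⁻¹ • c := by
      have : s⁻¹ • c = cfcₙ (fun t => s⁻¹ * t) c := by
        rw [cfcₙ_const_mul s⁻¹ (fun t => t) c (by fun_prop) rfl, cfcₙ_id' ℝ c]
      rw [this]
      exact cfcₙ_mono (fun t _ => min_le_left _ _) (by fun_prop) (by fun_prop) he0 (by simp)
    have h2 := star_left_conjugate_le_conjugate hgc a
    rw [has, mul_assoc, h1, mul_smul_comm, smul_mul_assoc] at h2
    have h3 : 0 ≤ a * a := by simpa [has] using star_mul_self_nonneg a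
    have h4 := CStarAlgebra.norm_le_norm_of_nonneg_of_le h3 h2
    have h5 : ‖a * a‖ = 1 := by
      have := CStarRing.norm_star_mul_self (x := a)
      rwa [has, ha1, one_mul] at this
    rw [h5, norm_smul, Real.norm_of_nonneg (by positivity), inv_mul_eq_div, one_le_div hs] at h4
    exact h4

end Helpers

/-- For an aperiodic C*-inclusion `A ⊆ B` and a closed two-sided ideal
`J` of `B`: `J ∩ A = {0}` iff every `x ∈ J` satisfies Kishimoto's condition as an element
of the `A`-bimodule `J`. -/
theorem aperiodic_inclusion_trivial_ideal_iff_kishimoto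
    {B : Type*} [NonUnitalCStarAlgebra B] [PartialOrder B] [StarOrderedRing B]
    (A J : Set B) (hA : IsCStarSubalgebra A) (hA0 : ∃ x ∈ A, x ≠ 0)
    (hap : IsAperiodicInclusion A) (hJ : IsClosedTwoSidedIdeal J) :
    J ∩ A = {0} ↔
      ∀ x ∈ J, ∀ D : Set B, IsHereditarySubalgebraIn A D → ∀ ε : ℝ, 0 < ε →
        ∃ a ∈ D, 0 ≤ a ∧ ‖a‖ = 1 ∧ ‖a * x * a‖ < ε := by
  constructor
  · intro hAJ x hx D hD ε hε
    obtain ⟨a, haD, ha, ha1, y, hy, hay⟩ := hap x D hD (ε / 2) (by positivity)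
    refine ⟨a, haD, ha, ha1, ?_⟩
    have hmem : a * x * a ∈ J := hJ.2.2.2.2.2 _ _ (hJ.2.2.2.2.1 _ _ hx)
    have h1 := norm_le_norm_sub_of_inter_eq_zero hA hJ hAJ hy hmem
    rw [norm_sub_rev] at h1
    have h2 := norm_le_norm_sub_add (a * x * a) y
    linarith
  · intro h
    refine Set.eq_singleton_iff_unique_mem.mpr ⟨⟨hJ.2.1, hA.2.1⟩, ?_⟩
    rintro x ⟨hxJ, hxA⟩
    by_contra hx0
    obtain ⟨D, hD, s, hs, hDs⟩ := exists_isHereditarySubalgebraIn_le_norm hA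
      (hA.2.2.2.2.1 _ (hA.2.2.2.2.2 _ hxA) _ hxA) (star_mul_self_nonneg x)
      (fun h0 => hx0 ((CStarRing.star_mul_self_eq_zero_iff x).mp h0))
    obtain ⟨a, haD, ha, ha1, has⟩ := h _ (hJ.2.2.2.2.1 (star x) x hxJ) D hD s hs
    exact (hDs a haD ha ha1).not_gt has
end
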